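/- Let d ≥ 2 and j_1 ≥ ⋯ ≥ j_d ≥ 1 with N = j_1 + ⋯ + j_d. For every n ≥ 1, the tensor rank of D(j_1,…,j_d)^{⊗n} is at most ∏_{k=2}^d C(n·j_k + N − 1, N − 1) · (j_k + 1)^n, where C(·,·) denotes a binomial coefficient. -/

import Mathlib

/-- The unnormalized Dicke tensor D(j_1,…,j_d): the N-party tensor over ({1,…,d})^N whose
entry at (s_1,…,s_N) is 1 if for every symbol i the number of parties p with s_p = i
equals j_i, and 0 otherwise. -/
noncomputable def Dicke (d : ℕ) (j : Fin d → ℕ) (N : ℕ) (s : Fin N → Fin d) : ℂ :=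
  if ∀ i, (Finset.univ.filter fun p => s p = i).card = j i then 1 else 0

/-- The n-th tensor power D(j_1,…,j_d)^{⊗n}. -/
noncomputable def DickePow (d : ℕ) (j : Fin d → ℕ) (N n : ℕ)
    (α : Fin N → Fin n → Fin d) : ℂ :=
  ∏ t, Dicke d j N (fun p => α p t)

/-!
If counts `c t` satisfy `c t ≡ J t (mod J t + 1)` for every `t`, then `c t ≥ J t`; so these
congruences together with the single equation `∑ t, c t = ∑ t, J t` already force `c = J`.
The equation depends on each party only through its own contribution to the total, which gives one
product term for each way to distribute the total over the parties. A congruence modulo `q` costs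
`q` product terms, by expanding in the characters of `ZMod q`. In `D(j_1,…,j_d)^{⊗n}`, apply this
to the number of parties showing the symbol `k` at each of the `n` positions, for all symbols `k`
but one, whose counts are determined by the others.
-/

theorem card_piAntidiag_univ (P : Type*) [Fintype P] [DecidableEq P] (m : ℕ) :
    (Finset.piAntidiag (Finset.univ : Finset P) m).card = (Fintype.card P).multichoose m := by
  rw [← Finset.map_sym_eq_piAntidiag, Finset.card_map, Finset.sym_univ, Finset.card_univ,
    Sym.card_sym_eq_multichoose]

theorem multichoose_eq_choose_sub_one {N : ℕ} (hN : N ≠ 0) (m : ℕ) :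
    N.multichoose m = (m + N - 1).choose (N - 1) := by
  rw [Nat.multichoose_eq, Nat.add_comm]
  exact Nat.choose_symm_of_eq_add (by omega)

theorem addChar_map_sum {ι A M : Type*} [AddCommMonoid A] [CommMonoid M] (ψ : AddChar A M)
    (s : Finset ι) (f : ι → A) : ψ (∑ i ∈ s, f i) = ∏ i ∈ s, ψ (f i) :=
  map_prod ψ.toMonoidHom (fun i => Multiplicative.ofAdd (f i)) s

theorem eq_iff_sum_eq_and_forall_cast_eq {ι : Type*} [Fintype ι] (c J : ι → ℕ) :
    c = J ↔ ∑ t, c t = ∑ t, J t ∧ ∀ t, (c t : ZMod (J t + 1)) = J t := by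
  refine ⟨fun h => by simp [h], fun ⟨hsum, hmod⟩ => ?_⟩
  have J_le_c (t : ι) : J t ≤ c t := by
    have h := (ZMod.natCast_eq_natCast_iff' _ _ _).1 (hmod t)
    rw [Nat.mod_eq_of_lt (Nat.lt_succ_self _)] at h
    exact h ▸ Nat.mod_le _ _
  have J_eq_c := (Finset.sum_eq_sum_iff_of_le fun t _ => J_le_c t).1 hsum.symm
  exact funext fun t => (J_eq_c t (Finset.mem_univ t)).symm

theorem forall_card_filter_eq_iff_forall_ne {P S : Type*} [Fintype P] [Fintype S]
    [DecidableEq S] (s : P → S) (j : S → ℕ) (hj : ∑ i, j i = Fintype.card P) (i₀ : S) :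
    (∀ i, (Finset.univ.filter fun p => s p = i).card = j i) ↔
      ∀ i ≠ i₀, (Finset.univ.filter fun p => s p = i).card = j i := by
  refine ⟨fun h i _ => h i, fun h i => ?_⟩
  obtain rfl | hi := eq_or_ne i i₀
  · have hsum : ∑ i, (Finset.univ.filter fun p => s p = i).card = ∑ i, j i := by
      rw [hj, ← Finset.card_univ, Finset.card_eq_sum_card_fiberwise fun p _ =>
        Finset.mem_coe.2 (Finset.mem_univ (s p))]
    rw [← Finset.add_sum_erase _ _ (Finset.mem_univ i),
      ← Finset.add_sum_erase _ j (Finset.mem_univ i),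
      Finset.sum_congr rfl fun k hk => h k (Finset.ne_of_mem_erase hk)] at hsum
    exact Nat.add_right_cancel hsum
  · exact h i hi

/-- `T` is a sum of `r` product tensors over the parties `P`, where party `p` has inputs `I p`;
that is, `T` has a rank-`r` decomposition. Terms may vanish or repeat, so this bounds the tensor
rank of `T` by `r`. -/
def HasRankDecomposition {K P : Type*} [CommSemiring K] [Fintype P] {I : P → Type*}
    (T : (∀ p, I p) → K) (r : ℕ) : Prop :=
  ∃ u : Fin r → ∀ p, I p → K, ∀ x, T x = ∑ t, ∏ p, u t p (x p)

namespace HasRankDecomposition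

variable {K P ι : Type*} [CommSemiring K] [Fintype P] {I : P → Type*} {T S : (∀ p, I p) → K}

theorem of_fintype_sum [Fintype ι] (u : ι → ∀ p, I p → K)
    (h : ∀ x, T x = ∑ i, ∏ p, u i p (x p)) : HasRankDecomposition T (Fintype.card ι) :=
  ⟨fun t => u ((Fintype.equivFin ι).symm t), fun x => by
    rw [h, ← (Fintype.equivFin ι).symm.sum_comp]⟩

theorem of_fintype_weighted_sum [Nonempty P] [Fintype ι] (c : ι → K) (u : ι → ∀ p, I p → K)
    (h : ∀ x, T x = ∑ i, c i * ∏ p, u i p (x p)) :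
    HasRankDecomposition T (Fintype.card ι) := by
  classical
  let p₀ := Classical.arbitrary P
  refine of_fintype_sum (fun i p y => (if p = p₀ then c i else 1) * u i p y) fun x => ?_
  simp only [h, Finset.prod_mul_distrib, Fintype.prod_ite_eq']

theorem one : HasRankDecomposition (fun _ : ∀ p, I p => (1 : K)) 1 :=
  ⟨fun _ _ _ => 1, by simp⟩

theorem mul {r s : ℕ} (hT : HasRankDecomposition T r) (hS : HasRankDecomposition S s) :
    HasRankDecomposition (fun x => T x * S x) (r * s) := by
  obtain ⟨u, hu⟩ := hT
  obtain ⟨v, hv⟩ := hS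
  convert of_fintype_sum (T := fun x => T x * S x)
    (fun (i : Fin r × Fin s) p y => u i.1 p y * v i.2 p y) fun x => ?_
  · simp
  · simp only [hu, hv, Finset.sum_mul_sum, Fintype.sum_prod_type, Finset.prod_mul_distrib]

theorem prod (s : Finset ι) {T : ι → (∀ p, I p) → K} {r : ι → ℕ}
    (h : ∀ i ∈ s, HasRankDecomposition (T i) (r i)) :
    HasRankDecomposition (fun x => ∏ i ∈ s, T i x) (∏ i ∈ s, r i) := by
  induction s using Finset.cons_induction with
  | empty => simpa using one
  | cons a s ha ih =>
    simp only [Finset.prod_cons]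
    exact (h a (Finset.mem_cons_self a s)).mul
      (ih fun i hi => h i (Finset.mem_cons_of_mem hi))

end HasRankDecomposition

section Sums

variable {P : Type*} [Fintype P] {I : P → Type*}

theorem hasRankDecomposition_ite_sum_eq {K : Type*} [CommSemiring K] (f : ∀ p, I p → ℕ) (m : ℕ) :
    HasRankDecomposition (fun x => if ∑ p, f p (x p) = m then (1 : K) else 0)
      ((Fintype.card P).multichoose m) := by
  classical
  rw [← card_piAntidiag_univ, ← Fintype.card_coe]
  refine .of_fintype_sum (fun a p y => if f p y = a.1 p then 1 else 0) fun x => ?_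
  simp only [Fintype.prod_boole, ← funext_iff]
  rw [Finset.sum_coe_sort _ fun a => if (fun p => f p (x p)) = a then (1 : K) else 0,
    Finset.sum_ite_eq]
  simp

theorem hasRankDecomposition_comp_sum {G : Type*} [AddCommGroup G] [Fintype G] [Nonempty P]
    (F : G → ℂ) (f : ∀ p, I p → G) :
    HasRankDecomposition (fun x => F (∑ p, f p (x p))) (Fintype.card G) := by
  rw [← AddChar.card_eq (α := G)]
  refine .of_fintype_weighted_sum (fun ψ => (AddChar.complexBasis G).repr F ψ)
    (fun ψ p y => ψ (f p y)) fun x => ?_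
  have F_expansion := congrFun ((AddChar.complexBasis G).sum_repr F) (∑ p, f p (x p))
  simpa [addChar_map_sum] using F_expansion.symm

theorem hasRankDecomposition_ite_sum_eq_pi {ι : Type*} [Fintype ι] [Nonempty P]
    (f : ∀ p, I p → ι → ℕ) (J : ι → ℕ) :
    HasRankDecomposition (fun x => if ∑ p, f p (x p) = J then (1 : ℂ) else 0)
      ((Fintype.card P).multichoose (∑ t, J t) * ∏ t, (J t + 1)) := by
  have total := hasRankDecomposition_ite_sum_eq (K := ℂ) (fun p y => ∑ t, f p y t) (∑ t, J t)
  have residue (t : ι) : HasRankDecomposition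
      (fun x => if ((∑ p, f p (x p) t : ℕ) : ZMod (J t + 1)) = J t then (1 : ℂ) else 0)
      (J t + 1) := by
    simpa using hasRankDecomposition_comp_sum (fun a : ZMod (J t + 1) => if a = J t then 1 else 0)
      (fun p y => (f p y t : ZMod (J t + 1)))
  convert total.mul (.prod Finset.univ fun t _ => residue t) with x
  rw [Fintype.prod_boole, ite_zero_mul_ite_zero, mul_one, Finset.sum_comm]
  refine if_congr ?_ rfl rfl
  simpa only [Finset.sum_apply] using eq_iff_sum_eq_and_forall_cast_eq (∑ p, f p (x p)) J

theorem hasRankDecomposition_prod_ite_card_eq {S ι : Type*} [DecidableEq S] [Fintype ι] [Nonempty P]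
    (k : S) (m : ℕ) :
    HasRankDecomposition
      (fun α : P → ι → S => ∏ t,
        if (Finset.univ.filter fun p => α p t = k).card = m then (1 : ℂ) else 0)
      ((Fintype.card P).multichoose (Fintype.card ι * m) * (m + 1) ^ Fintype.card ι) := by
  simpa [Fintype.prod_boole, funext_iff] using hasRankDecomposition_ite_sum_eq_pi
    (fun (_ : P) (y : ι → S) t => if y t = k then 1 else 0) fun _ => m

end Sums

theorem DickePow_eq_prod_erase {d N : ℕ} {j : Fin d → ℕ} (hN : N = ∑ i, j i) (i₀ : Fin d) (n : ℕ)
    (α : Fin N → Fin n → Fin d) :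
    DickePow d j N n α = ∏ k ∈ Finset.univ.erase i₀, ∏ t,
      if (Finset.univ.filter fun p => α p t = k).card = j k then 1 else 0 := by
  rw [DickePow, Finset.prod_comm]
  refine Finset.prod_congr rfl fun t _ => ?_
  simp only [Dicke, Finset.prod_boole, Finset.mem_erase, Finset.mem_univ, and_true]
  exact if_congr (forall_card_filter_eq_iff_forall_ne _ j (by simp [hN]) i₀) rfl rfl

theorem DickePow_rank_le_general {d N : ℕ} {j : Fin d → ℕ} (hN : N = ∑ i, j i) (hN₀ : N ≠ 0)
    (i₀ : Fin d) (n : ℕ) :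
    HasRankDecomposition (DickePow d j N n)
      (∏ k ∈ Finset.univ.erase i₀, (n * j k + N - 1).choose (N - 1) * (j k + 1) ^ n) := by
  have : Nonempty (Fin N) := Fin.pos_iff_nonempty.1 (Nat.pos_of_ne_zero hN₀)
  rw [funext (DickePow_eq_prod_erase hN i₀ n)]
  refine .prod _ fun k _ => ?_
  simpa only [Fintype.card_fin, multichoose_eq_choose_sub_one hN₀] using
    hasRankDecomposition_prod_ite_card_eq (P := Fin N) (ι := Fin n) k (j k)

/-- for d ≥ 2, j_1 ≥ ⋯ ≥ j_d ≥ 1, N = Σ j_i and n ≥ 1, the tensor rank of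
D(j_1,…,j_d)^{⊗n} is at most ∏_{k=2}^d C(n·j_k + N − 1, N − 1) · (j_k + 1)^n. -/
theorem DickePow_rank_le (d : ℕ) (hd : 2 ≤ d) (j : Fin d → ℕ) (hmono : Antitone j)
    (hpos : ∀ i, 1 ≤ j i) (N : ℕ) (hN : N = ∑ i, j i) (n : ℕ) (hn : 1 ≤ n) :
    ∃ u : Fin (∏ k ∈ Finset.univ.erase (⟨0, by omega⟩ : Fin d),
          (n * j k + N - 1).choose (N - 1) * (j k + 1) ^ n) →
        Fin N → (Fin n → Fin d) → ℂ,
      ∀ α : Fin N → Fin n → Fin d,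
        DickePow d j N n α = ∑ t, ∏ p, u t p (α p) := by
  have hN₀ : N ≠ 0 := fun h =>
    absurd (hpos ⟨0, by omega⟩) (by simp [Finset.sum_eq_zero_iff.1 (hN.symm.trans h)])
  exact DickePow_rank_le_general hN hN₀ ⟨0, by omega⟩ n
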